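/- Let n ≥ 3 be an integer, δ = √2/n, and k = n − 3. Define points pᵢ = (i·δ²/(√2 − 2δ), i·δ) for 0 ≤ i ≤ k + 1 and qᵢ = pᵢ + (1 − δ, 2δ − 1) for 0 ≤ i ≤ k + 1, and let P = {p₀, …, p_{k+1}} ∪ {q₀, …, q_{k+1}}. Then for every 0 ≤ i ≤ k, the axis-aligned square Sᵢ of side length 1 − δ with center cᵢ = ((pᵢ)₁ + (1 − δ)/2, (pᵢ)₂ + δ − (1 − δ)/2) — equivalently, the closed L∞-ball of radius (1 − δ)/2 about cᵢ — has pᵢ on its west side, p_{i+1} on its north side, and qᵢ as its southeast vertex, and no point of P lies in the interior of Sᵢ. Consequently (pᵢ, p_{i+1}), (pᵢ, qᵢ), and (p_{i+1}, qᵢ) are all edges of the L∞-Delaunay graph of P. -/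

import Mathlib

open Real

noncomputable section

/-- The `L∞` norm of a point of the plane. -/
def linf (u : ℝ × ℝ) : ℝ := max |u.1| |u.2|

/-- The `L₁` norm of a point of the plane. -/
def l1 (u : ℝ × ℝ) : ℝ := |u.1| + |u.2|

/-- The Euclidean (`L₂`) norm of a point of the plane. -/
def l2 (u : ℝ × ℝ) : ℝ := Real.sqrt (u.1 ^ 2 + u.2 ^ 2)

/-- `u` and `v` are joined by an edge of the Delaunay graph of `P` with respect to the
norm `N`: they are distinct and there is an `N`-ball (of positive radius) having both on
its boundary and no point of `P` in its interior. -/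
def IsDelaunayEdge (N : ℝ × ℝ → ℝ) (P : Finset (ℝ × ℝ)) (u v : ℝ × ℝ) : Prop :=
  u ≠ v ∧ ∃ (c : ℝ × ℝ) (r : ℝ), 0 < r ∧ N (u - c) = r ∧ N (v - c) = r ∧
    ∀ p ∈ P, r ≤ N (p - c)

/-- `L` is the total Euclidean length of some finite path from `a` to `b` all of whose
edges are edges of the `N`-Delaunay graph of `P`. -/
def IsPathLength (N : ℝ × ℝ → ℝ) (P : Finset (ℝ × ℝ)) (a b : ℝ × ℝ) (L : ℝ) : Prop :=
  ∃ (n : ℕ) (p : Fin (n + 1) → ℝ × ℝ), p 0 = a ∧ p (Fin.last n) = b ∧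
    (∀ i : Fin n, IsDelaunayEdge N P (p i.castSucc) (p i.succ)) ∧
    L = ∑ i : Fin n, l2 (p i.succ - p i.castSucc)

/-- The graph distance between `a` and `b` in the `N`-Delaunay graph of `P`:
the infimum of Euclidean path lengths. -/
def dT (N : ℝ × ℝ → ℝ) (P : Finset (ℝ × ℝ)) (a b : ℝ × ℝ) : ℝ :=
  sInf {L : ℝ | IsPathLength N P a b L}

/-- `P` is in general position for the `L∞`-metric: no four points of `P` lie on the
boundary of a common axis-aligned square, and no two points share an `x`- or a
`y`-coordinate. -/
def GenPosInf (P : Finset (ℝ × ℝ)) : Prop :=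
  (∀ (c : ℝ × ℝ) (r : ℝ), (P.filter (fun p => linf (p - c) = r)).card ≤ 3) ∧
  (∀ u ∈ P, ∀ v ∈ P, u ≠ v → u.1 ≠ v.1 ∧ u.2 ≠ v.2)

/-- `P` is in general position for the `L₁`-metric: no four points of `P` lie on the
boundary of a common `L₁`-ball, and no two points have equal coordinate sums or equal
coordinate differences. -/
def GenPos1 (P : Finset (ℝ × ℝ)) : Prop :=
  (∀ (c : ℝ × ℝ) (r : ℝ), (P.filter (fun p => l1 (p - c) = r)).card ≤ 3) ∧
  (∀ u ∈ P, ∀ v ∈ P, u ≠ v → u.1 + u.2 ≠ v.1 + v.2 ∧ u.1 - u.2 ≠ v.1 - v.2)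

/-!
Given a coordinatewise monotone sequence `p`, let `Sᵢ` be the square of side `s` whose west side
passes through `pᵢ` and whose north side passes through `pᵢ₊₁`, and let `qᵢ` be its southeast
vertex. By monotonicity `p₀, …, pᵢ` lie weakly west of `Sᵢ`, the later `pⱼ` weakly north of it,
`qᵢ` and the later `qⱼ` weakly east of it and the earlier `qⱼ` weakly south of it, so its interior
is empty. If moreover `pᵢ₊₁ ≤ pᵢ + (s, s)`, then `pᵢ` and `pᵢ₊₁` lie on the boundary of `Sᵢ`. In the
example, `s = 1 - δ` and `p` is the sequence of multiples of one small positive vector.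
-/

lemma linf_le_iff {u : ℝ × ℝ} {r : ℝ} : linf u ≤ r ↔ |u.1| ≤ r ∧ |u.2| ≤ r :=
  max_le_iff

lemma le_linf_sub_iff {z c : ℝ × ℝ} {r : ℝ} :
    r ≤ linf (z - c) ↔
      (z.1 ≤ c.1 - r ∨ c.1 + r ≤ z.1) ∨ (z.2 ≤ c.2 - r ∨ c.2 + r ≤ z.2) := by
  simp only [linf, Prod.fst_sub, Prod.snd_sub, le_max_iff, le_abs]
  grind

lemma IsDelaunayEdge.of_forall_le {N : ℝ × ℝ → ℝ} {P : Finset (ℝ × ℝ)} {u v c : ℝ × ℝ} {r : ℝ}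
    (hr : 0 < r) (hP : ∀ z ∈ P, r ≤ N (z - c)) (hu : u ∈ P) (hv : v ∈ P) (huv : u ≠ v)
    (huc : N (u - c) ≤ r) (hvc : N (v - c) ≤ r) : IsDelaunayEdge N P u v :=
  ⟨huv, c, r, hr, huc.antisymm (hP u hu), hvc.antisymm (hP v hv), hP⟩

/-- The center of the square `Sᵢ` of side `s` whose west side lies on the vertical line through
`p i` and whose north side lies on the horizontal line through `p (i + 1)`. -/
def squareCenter (s : ℝ) (p : ℕ → ℝ × ℝ) (i : ℕ) : ℝ × ℝ :=
  ((p i).1 + s / 2, (p (i + 1)).2 - s / 2)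

/-- The southeast vertex `qᵢ` of the square `Sᵢ` with center `squareCenter s p i`. -/
def southeastVertex (s : ℝ) (p : ℕ → ℝ × ℝ) (i : ℕ) : ℝ × ℝ :=
  ((p i).1 + s, (p (i + 1)).2 - s)

/-- The point set `{p₀, …, pₖ₊₁} ∪ {q₀, …, qₖ₊₁}`, where `qᵢ = southeastVertex s p i`. -/
def staircasePoints (s : ℝ) (p : ℕ → ℝ × ℝ) (k : ℕ) : Finset (ℝ × ℝ) :=
  (Finset.range (k + 2)).image p ∪ (Finset.range (k + 2)).image (southeastVertex s p)

section Staircase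

variable {s : ℝ} {p : ℕ → ℝ × ℝ} {i j k : ℕ}

lemma mem_staircasePoints_left (hj : j ≤ k + 1) : p j ∈ staircasePoints s p k :=
  Finset.mem_union_left _ (Finset.mem_image_of_mem p (Finset.mem_range_succ_iff.mpr hj))

lemma mem_staircasePoints_right (hj : j ≤ k + 1) :
    southeastVertex s p j ∈ staircasePoints s p k :=
  Finset.mem_union_right _ (Finset.mem_image_of_mem _ (Finset.mem_range_succ_iff.mpr hj))

lemma southeastVertex_eq_squareCenter_add :
    southeastVertex s p i = ((squareCenter s p i).1 + s / 2, (squareCenter s p i).2 - s / 2) := by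
  simp only [southeastVertex, squareCenter, add_assoc, sub_sub, add_halves]

lemma half_le_linf_sub_squareCenter (hp : Monotone p) :
    s / 2 ≤ linf (p j - squareCenter s p i) := by
  simp only [le_linf_sub_iff, squareCenter, add_sub_cancel_right, sub_add_cancel]
  rcases le_or_gt j i with hji | hij
  · have west : (p j).1 ≤ (p i).1 := (hp hji).1
    exact .inl (.inl west)
  · have north : (p (i + 1)).2 ≤ (p j).2 := (hp hij).2
    exact .inr (.inr north)

lemma half_le_linf_southeastVertex_sub_squareCenter (hp : Monotone p) :
    s / 2 ≤ linf (southeastVertex s p j - squareCenter s p i) := by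
  simp only [le_linf_sub_iff, southeastVertex, squareCenter, add_assoc, sub_sub, add_halves]
  rcases le_or_gt i j with hij | hji
  · have east : (p i).1 + s ≤ (p j).1 + s := by grw [(hp hij).1]
    exact .inl (.inr east)
  · have south : (p (j + 1)).2 - s ≤ (p (i + 1)).2 - s := by grw [(hp (Nat.succ_le_succ hji.le)).2]
    exact .inr (.inl south)

lemma half_le_linf_sub_squareCenter_of_mem (hp : Monotone p) {z : ℝ × ℝ}
    (hz : z ∈ staircasePoints s p k) : s / 2 ≤ linf (z - squareCenter s p i) := by
  simp only [staircasePoints, Finset.mem_union, Finset.mem_image] at hz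
  rcases hz with ⟨j, -, rfl⟩ | ⟨j, -, rfl⟩
  · exact half_le_linf_sub_squareCenter hp
  · exact half_le_linf_southeastVertex_sub_squareCenter hp

lemma linf_sub_squareCenter_le (hle : (p i).2 ≤ (p (i + 1)).2)
    (hstep : (p (i + 1)).2 ≤ (p i).2 + s) : linf (p i - squareCenter s p i) ≤ s / 2 := by
  simp only [linf_le_iff, squareCenter, Prod.fst_sub, Prod.snd_sub, abs_le]
  refine ⟨⟨?_, ?_⟩, ?_, ?_⟩ <;> linarith

lemma linf_succ_sub_squareCenter_le (hle : (p i).1 ≤ (p (i + 1)).1)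
    (hstep : (p (i + 1)).1 ≤ (p i).1 + s) : linf (p (i + 1) - squareCenter s p i) ≤ s / 2 := by
  simp only [linf_le_iff, squareCenter, Prod.fst_sub, Prod.snd_sub, abs_le]
  refine ⟨⟨?_, ?_⟩, ?_, ?_⟩ <;> linarith

lemma linf_southeastVertex_sub_squareCenter_le (hs : 0 ≤ s) :
    linf (southeastVertex s p i - squareCenter s p i) ≤ s / 2 := by
  simp only [linf_le_iff, southeastVertex, squareCenter, Prod.fst_sub, Prod.snd_sub, abs_le]
  refine ⟨⟨?_, ?_⟩, ?_, ?_⟩ <;> linarith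

lemma ne_southeastVertex (hs : s ≠ 0) : p i ≠ southeastVertex s p i := fun h ↦
  hs (left_eq_add.mp (congrArg Prod.fst h))

lemma succ_ne_southeastVertex (hs : s ≠ 0) : p (i + 1) ≠ southeastVertex s p i := fun h ↦
  hs (sub_eq_self.mp (congrArg Prod.snd h).symm)

theorem lower_bound_example_squares_general (hp : StrictMono p) (hi : i ≤ k)
    (hstep : p (i + 1) ≤ p i + (s, s)) :
    ((p i).1 = (squareCenter s p i).1 - s / 2 ∧ |(p i).2 - (squareCenter s p i).2| ≤ s / 2) ∧
    ((p (i + 1)).2 = (squareCenter s p i).2 + s / 2 ∧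
      |(p (i + 1)).1 - (squareCenter s p i).1| ≤ s / 2) ∧
    southeastVertex s p i = ((squareCenter s p i).1 + s / 2, (squareCenter s p i).2 - s / 2) ∧
    (∀ z ∈ staircasePoints s p k, s / 2 ≤ linf (z - squareCenter s p i)) ∧
    IsDelaunayEdge linf (staircasePoints s p k) (p i) (p (i + 1)) ∧
    IsDelaunayEdge linf (staircasePoints s p k) (p i) (southeastVertex s p i) ∧
    IsDelaunayEdge linf (staircasePoints s p k) (p (i + 1)) (southeastVertex s p i) := by
  have hlt : p i < p (i + 1) := hp i.lt_succ_self
  have hs : 0 < s := by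
    have h : (0 : ℝ × ℝ) < (s, s) := pos_of_lt_add_right (hlt.trans_le hstep)
    exact (Prod.lt_iff.mp h).elim And.left And.right
  have west := linf_sub_squareCenter_le hlt.le.2 hstep.2
  have north := linf_succ_sub_squareCenter_le hlt.le.1 hstep.1
  have southeast := linf_southeastVertex_sub_squareCenter_le (p := p) (i := i) hs.le
  have hempty : ∀ z ∈ staircasePoints s p k, s / 2 ≤ linf (z - squareCenter s p i) :=
    fun z ↦ half_le_linf_sub_squareCenter_of_mem hp.monotone
  have hpi : p i ∈ staircasePoints s p k := mem_staircasePoints_left (by lia)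
  have hpi' : p (i + 1) ∈ staircasePoints s p k := mem_staircasePoints_left (by lia)
  have hqi : southeastVertex s p i ∈ staircasePoints s p k := mem_staircasePoints_right (by lia)
  exact ⟨⟨(add_sub_cancel_right _ _).symm, (linf_le_iff.mp west).2⟩,
    ⟨(sub_add_cancel _ _).symm, (linf_le_iff.mp north).1⟩,
    southeastVertex_eq_squareCenter_add, hempty,
    .of_forall_le (half_pos hs) hempty hpi hpi' hlt.ne west north,
    .of_forall_le (half_pos hs) hempty hpi hqi (ne_southeastVertex hs.ne') west southeast,
    .of_forall_le (half_pos hs) hempty hpi' hqi (succ_ne_southeastVertex hs.ne') north southeast⟩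

end Staircase

/-- The common difference `(δ² / (√2 - 2δ), δ)` of the arithmetic progression `p₀, p₁, …` in the
example. -/
def exampleStep (δ : ℝ) : ℝ × ℝ := (δ ^ 2 / (√2 - 2 * δ), δ)

lemma nsmul_exampleStep (δ : ℝ) (j : ℕ) :
    j • exampleStep δ = ((j : ℝ) * δ ^ 2 / (√2 - 2 * δ), (j : ℝ) * δ) := by
  simp only [exampleStep, Prod.smul_mk, nsmul_eq_mul, mul_div_assoc]

lemma exampleStep_pos {δ : ℝ} (hδ : 0 < δ) (hδ2 : 2 * δ ≤ √2) : 0 < exampleStep δ :=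
  Prod.lt_iff.mpr (.inr ⟨div_nonneg (sq_nonneg δ) (sub_nonneg.mpr hδ2), hδ⟩)

lemma exampleStep_le {δ : ℝ} (hδ : 0 < δ) (hδ3 : 3 * δ ≤ √2) :
    exampleStep δ ≤ (1 - δ, 1 - δ) := by
  have half : δ ≤ 1 - δ := by linarith [sqrt_two_lt_three_halves]
  have width : δ ^ 2 / (√2 - 2 * δ) ≤ δ := by
    rw [div_le_iff₀ (by linarith), sq]
    gcongr
    linarith
  exact ⟨width.trans half, half⟩

/-- **Lemma (structure of the lower-bound example).** With `δ = √2/n`, `k = n − 3`,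
`pᵢ = (i·δ²/(√2 − 2δ), i·δ)` and `qᵢ = pᵢ + (1 − δ, 2δ − 1)`, for each `0 ≤ i ≤ k` the
axis-aligned square of side `1 − δ` centered at
`cᵢ = ((pᵢ)₁ + (1 − δ)/2, (pᵢ)₂ + δ − (1 − δ)/2)` has `pᵢ` on its west side, `pᵢ₊₁` on
its north side, `qᵢ` as its southeast vertex, and no point of `P` in its interior; hence
`(pᵢ, pᵢ₊₁)`, `(pᵢ, qᵢ)` and `(pᵢ₊₁, qᵢ)` are edges of the `L∞`-Delaunay graph of `P`. -/
theorem lower_bound_example_squares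
    (n : ℕ) (hn : 3 ≤ n) (δ : ℝ) (hδ : δ = Real.sqrt 2 / n)
    (k : ℕ) (hk : k = n - 3)
    (p q : ℕ → ℝ × ℝ)
    (hp : ∀ i : ℕ, p i = ((i : ℝ) * δ ^ 2 / (Real.sqrt 2 - 2 * δ), (i : ℝ) * δ))
    (hq : ∀ i : ℕ, q i = ((p i).1 + (1 - δ), (p i).2 + (2 * δ - 1)))
    (P : Finset (ℝ × ℝ))
    (hP : P = (Finset.range (k + 2)).image p ∪ (Finset.range (k + 2)).image q) :
    ∀ i : ℕ, i ≤ k → ∀ c : ℝ × ℝ,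
      c = ((p i).1 + (1 - δ) / 2, (p i).2 + δ - (1 - δ) / 2) →
      ((p i).1 = c.1 - (1 - δ) / 2 ∧ |(p i).2 - c.2| ≤ (1 - δ) / 2) ∧
      ((p (i + 1)).2 = c.2 + (1 - δ) / 2 ∧ |(p (i + 1)).1 - c.1| ≤ (1 - δ) / 2) ∧
      q i = (c.1 + (1 - δ) / 2, c.2 - (1 - δ) / 2) ∧
      (∀ z ∈ P, (1 - δ) / 2 ≤ linf (z - c)) ∧
      IsDelaunayEdge linf P (p i) (p (i + 1)) ∧
      IsDelaunayEdge linf P (p i) (q i) ∧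
      IsDelaunayEdge linf P (p (i + 1)) (q i) := by
  intro i hi c hc
  have hδ_pos : 0 < δ := by rw [hδ]; positivity
  have hδ_le : 3 * δ ≤ √2 := by
    rw [hδ, mul_div_left_comm]
    exact mul_le_of_le_one_right (sqrt_nonneg 2) (div_le_one_of_le₀ (mod_cast hn) n.cast_nonneg)
  have hp_nsmul : p = (· • exampleStep δ) :=
    funext fun j ↦ (hp j).trans (nsmul_exampleStep δ j).symm
  have hp_succ (j : ℕ) : p (j + 1) = p j + exampleStep δ := by simp only [hp_nsmul, succ_nsmul]
  have hp_mono : StrictMono p :=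
    hp_nsmul ▸ nsmul_left_strictMono (exampleStep_pos hδ_pos (by linarith))
  have hq_eq : q = southeastVertex (1 - δ) p := by
    funext j
    rw [hq, southeastVertex, hp_succ, Prod.snd_add, exampleStep]
    ring_nf
  have hc_eq : c = squareCenter (1 - δ) p i := by
    rw [hc, squareCenter, hp_succ, Prod.snd_add, exampleStep]
  rw [hP, hq_eq, hc_eq]
  refine lower_bound_example_squares_general hp_mono hi ?_
  grw [hp_succ, exampleStep_le hδ_pos hδ_le]
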